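/- Let 1 ≤ M ≤ N and let A = (a_{ij}) ∈ ℝ^{N×N} be such that ∑_{i,j=1}^M a_{ij} v_i v_j > 0 for every nonzero v ∈ ℝ^M. For i, j ∈ {1,…,N} let β_{ij} : ℝ^N → [0,1] be functions such that whenever a_{ij} > 0 the map U = (u_1,…,u_N) ↦ β_{ij}(U)(u_j − u_i) is continuous on ℝ^N. Define b_{ij}(U) = −max{β_{ij}(U) a_{ij}, 0, β_{ji}(U) a_{ji}} for i ≠ j and b_{ii}(U) = −∑_{j ≠ i} b_{ij}(U). Then: (i) for every i ∈ {1,…,M} and every j ∈ {1,…,N} the map U ↦ b_{ij}(U)(u_j − u_i) is continuous on ℝ^N; (ii) |b_{ij}(U)| ≤ max{|a_{ij}|, |a_{ji}|} for all i ≠ j and all U, so b_{ij} is bounded; and (iii) for any g₁,…,g_M ∈ ℝ and any boundary values u^b_{M+1},…,u^b_N ∈ ℝ the nonlinear system ∑_{j=1}^N (a_{ij} + b_{ij}(U)) u_j = g_i (i = 1,…,M), u_i = u^b_i (i = M+1,…,N) possesses a solution U ∈ ℝ^N. -/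

import Mathlib

/-!
The flux `b i j (U) (u j - u i)` is continuous because, after multiplication by `|u j - u i|`, the
maximum in `b` distributes over continuous functions; passing from `|d|` back to `d` is harmless
since `b` is bounded (`continuous_mul_of_abs`).

For existence, the boundary values are eliminated and the system becomes `F V = 0` with
`V ∈ ℝ^M`. As `b` has zero row sums, `F` involves `b` only through the continuous fluxes. As `b`
is symmetric with nonpositive off-diagonal entries, it is positive semidefinite
(`diffusion_nonneg`), so `⟨F V, V⟩ ≥ α ‖V‖² - S ‖V‖`, where `α > 0` comes from the definiteness of
the interior block and `S` bounds the contribution of the data. A continuous coercive field on a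
finite-dimensional space has a zero (`exists_zero_of_inner_pos`).

That last fact is a form of Brouwer's theorem, and it is proved by the Milnor–Rogers volume
argument. A continuous coercive field without zeros can be deformed to the identity far away and
smoothed, then normalized to a Lipschitz map `f = id + h` which is the identity off a ball and
sends that ball into the sphere. The maps `id + t h` are bijections of the ball for small `t`, so
the integral of `det (1 + t h')` over the ball is its volume for small `t`. Since the integral is
polynomial in `t`, this persists at `t = 1`, where the Jacobian vanishes identically.
-/

/-! ### Brouwer's theorem in coercive form -/

section Brouwer

open MeasureTheory Metric Set Filter Topology
open scoped NNReal ContDiff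

theorem image_eq_of_bijective_of_fixed {α : Type*} {f : α → α} (hf : Function.Bijective f) {s : Set α}
    (hs : ∀ x ∉ s, f x = x) : f '' s = s := by
  apply Subset.antisymm
  · rintro _ ⟨x, hx, rfl⟩
    by_contra hfx
    exact hfx (by rwa [hf.1 (hs _ hfx)])
  · intro y hy
    obtain ⟨x, rfl⟩ := hf.2 y
    refine ⟨x, ?_, rfl⟩
    by_contra hx
    exact hx (by rwa [hs x hx] at hy)

variable {E : Type*} [NormedAddCommGroup E] [InnerProductSpace ℝ E]

theorem det_one_add_smul_pos (C : ℝ) :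
    ∃ δ > 0, ∀ t : ℝ, |t| < δ → ∀ L : E →L[ℝ] E, ‖L‖ ≤ C → 0 < (1 + t • L : E →L[ℝ] E).det := by
  have hopen : IsOpen {T : E →L[ℝ] E | 0 < T.det} :=
    isOpen_lt continuous_const ContinuousLinearMap.continuous_det
  have hmem : (1 : E →L[ℝ] E) ∈ {T : E →L[ℝ] E | 0 < T.det} := by
    have : (1 : E →L[ℝ] E).det = 1 := LinearMap.det_id
    simp [this]
  obtain ⟨ε, hε, hball⟩ := Metric.isOpen_iff.1 hopen _ hmem
  have hC : 0 < |C| + 1 := by positivity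
  refine ⟨ε / (|C| + 1), by positivity, fun t ht L hL => hball ?_⟩
  rw [mem_ball, dist_eq_norm, add_sub_cancel_left, norm_smul, Real.norm_eq_abs]
  calc |t| * ‖L‖ ≤ |t| * (|C| + 1) := by
        gcongr
        linarith [le_abs_self C]
    _ < ε := by rwa [lt_div_iff₀ hC] at ht

theorem lipschitz_inv_smul {K : E → E} {s : E → ℝ} {C D : ℝ≥0} (hK : LipschitzWith C K)
    (hs : LipschitzWith D s) {c : ℝ≥0} (hc : 0 < c) (hcs : ∀ x, c ≤ s x) (hKs : ∀ x, ‖K x‖ ≤ s x) :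
    LipschitzWith ((C + D) / c) (fun x => (s x)⁻¹ • K x) := by
  have hc' : (0 : ℝ) < c := hc
  refine LipschitzWith.of_dist_le_mul fun x y => ?_
  have hx := hc'.trans_le (hcs x)
  have hy := hc'.trans_le (hcs y)
  have e : (s x)⁻¹ • K x - (s y)⁻¹ • K y
      = (s x)⁻¹ • ((K x - K y) + ((s y - s x) * (s y)⁻¹) • K y) := by
    rw [smul_add, smul_smul, smul_sub, sub_add, ← sub_smul]
    congr 2
    field_simp
    ring
  have h1 : ‖K x - K y‖ ≤ C * dist x y := by rw [← dist_eq_norm]; exact hK.dist_le_mul x y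
  have h2 : |s y - s x| ≤ D * dist x y := by
    have := hs.dist_le_mul x y
    rwa [dist_comm, Real.dist_eq] at this
  have h3 : ‖((s y - s x) * (s y)⁻¹) • K y‖ ≤ D * dist x y := by
    rw [norm_smul, norm_mul, norm_inv, Real.norm_eq_abs, Real.norm_eq_abs, abs_of_pos hy, mul_assoc]
    have : (s y)⁻¹ * ‖K y‖ ≤ 1 := by
      rw [inv_mul_le_iff₀ hy, mul_one]; exact hKs y
    calc _ ≤ |s y - s x| * 1 := by gcongr
      _ ≤ _ := by rwa [mul_one]
  rw [dist_eq_norm, e, norm_smul, norm_inv, Real.norm_eq_abs, abs_of_pos hx, NNReal.coe_div,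
    NNReal.coe_add]
  calc (s x)⁻¹ * ‖(K x - K y) + ((s y - s x) * (s y)⁻¹) • K y‖
      ≤ (c : ℝ)⁻¹ * (C * dist x y + D * dist x y) := by
        gcongr
        · exact hcs x
        · exact (norm_add_le _ _).trans (add_le_add h1 h3)
    _ = _ := by rw [div_eq_inv_mul]; ring

variable [FiniteDimensional ℝ E]

/-- `det (1 + t L)` is a polynomial in `t` of degree at most the dimension. -/
theorem det_one_add_smul_poly (L : E →L[ℝ] E) :
    ∃ p : Polynomial ℝ, p.natDegree ≤ Module.finrank ℝ E ∧
      ∀ t : ℝ, p.eval t = (1 + t • L : E →L[ℝ] E).det := by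
  classical
  let e := Module.finBasis ℝ E
  let A := LinearMap.toMatrix e e (L : E →ₗ[ℝ] E)
  refine ⟨((Polynomial.X : Polynomial ℝ) • A.map Polynomial.C +
    Matrix.map 1 Polynomial.C).det, ?_, fun t => ?_⟩
  · simpa using Polynomial.natDegree_det_X_add_C_le A 1
  · have h1 : (1 + t • L : E →L[ℝ] E).det
        = (LinearMap.toMatrix e e ((1 + t • L : E →L[ℝ] E) : E →ₗ[ℝ] E)).det :=
      (LinearMap.det_toMatrix e _).symm
    have h2 : LinearMap.toMatrix e e ((1 + t • L : E →L[ℝ] E) : E →ₗ[ℝ] E) = t • A + 1 := by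
      have : ((1 + t • L : E →L[ℝ] E) : E →ₗ[ℝ] E) = t • (L : E →ₗ[ℝ] E) + LinearMap.id := by
        ext x; simp [add_comm]
      rw [this, map_add, map_smul, LinearMap.toMatrix_id]
    rw [h1, h2, ← Polynomial.coe_evalRingHom, RingHom.map_det]
    congr 1
    ext i j
    by_cases hij : i = j
    · subst hij
      simp
      ring
    · simp [hij]
      ring

/-- A perturbation of the identity with Lipschitz constant `< 1` is a bijection of the whole space. -/
theorem add_smul_bijective {h : E → E} {C : ℝ≥0} (hL : LipschitzWith C h) {t : ℝ}
    (ht : |t| * C < 1) : Function.Bijective (fun x => x + t • h x) := by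
  have hc : ApproximatesLinearOn (fun x => x + t • h x)
      ((ContinuousLinearEquiv.refl ℝ E : E ≃L[ℝ] E) : E →L[ℝ] E) univ (‖t‖₊ * C) := by
    rw [ApproximatesLinearOn.approximatesLinearOn_iff_lipschitzOnWith, lipschitzOnWith_univ]
    have : (fun x => x + t • h x) - ⇑((ContinuousLinearEquiv.refl ℝ E : E ≃L[ℝ] E) : E →L[ℝ] E)
        = fun x => t • h x := by
      ext x; simp
    rw [this]
    exact (lipschitzWith_smul t).comp hL
  have hlt : Subsingleton E ∨
      ‖t‖₊ * C < ‖((ContinuousLinearEquiv.refl ℝ E).symm : E →L[ℝ] E)‖₊⁻¹ := by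
    rcases subsingleton_or_nontrivial E with h | h
    · exact Or.inl h
    · right
      have h1 : ‖((ContinuousLinearEquiv.refl ℝ E).symm : E →L[ℝ] E)‖₊ = 1 := by
        have : ((ContinuousLinearEquiv.refl ℝ E).symm : E →L[ℝ] E) = ContinuousLinearMap.id ℝ E := rfl
        rw [this]
        ext
        simp
      rw [h1, inv_one, ← NNReal.coe_lt_coe]
      simpa using ht
  exact ⟨injOn_univ.1 (hc.injOn hlt), hc.surjective hlt⟩

variable [MeasurableSpace E] [BorelSpace E]

theorem integrableOn_det {h : E → E} {C : ℝ≥0} (hL : LipschitzWith C h) (ρ t : ℝ) :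
    IntegrableOn (fun x => (1 + t • fderiv ℝ h x : E →L[ℝ] E).det) (ball 0 ρ) := by
  have hcont : Continuous fun L : E →L[ℝ] E => (1 + t • L : E →L[ℝ] E).det :=
    ContinuousLinearMap.continuous_det.comp (by fun_prop)
  obtain ⟨B, hB⟩ := (isCompact_closedBall (0 : E →L[ℝ] E) C).exists_bound_of_continuousOn
    hcont.continuousOn
  refine Measure.integrableOn_of_bounded (M := B) measure_ball_lt_top.ne
    (hcont.measurable.comp (measurable_fderiv ℝ h)).aestronglyMeasurable ?_
  refine Eventually.of_forall fun x => hB _ ?_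
  simpa using norm_fderiv_le_of_lipschitz ℝ hL

/-- For small `t`, the map `x ↦ x + t h x` is a bijection of the ball onto itself with positive
Jacobian, so the integral of its Jacobian is the volume of the ball. -/
theorem integral_det_small {h : E → E} {C : ℝ≥0} (hL : LipschitzWith C h) {ρ : ℝ}
    (hd : ∀ x ∈ ball (0 : E) ρ, DifferentiableAt ℝ h x) (h0 : ∀ x ∉ ball (0 : E) ρ, h x = 0) :
    ∃ δ > 0, ∀ t : ℝ, |t| < δ →
      ∫ x in ball (0 : E) ρ, (1 + t • fderiv ℝ h x : E →L[ℝ] E).det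
        = volume.real (ball (0 : E) ρ) := by
  obtain ⟨δ, hδ, hpos⟩ := det_one_add_smul_pos (E := E) C
  refine ⟨min δ (1 / (C + 1)), by positivity, fun t ht => ?_⟩
  have htC : |t| * C < 1 := by
    have h1 : |t| * ((C : ℝ) + 1) < 1 := by
      have := ht.trans_le (min_le_right _ _)
      rwa [lt_div_iff₀ (by positivity)] at this
    nlinarith [abs_nonneg t]
  have hbij := add_smul_bijective hL htC
  have himg := image_eq_of_bijective_of_fixed hbij (s := ball (0 : E) ρ)
    (fun x hx => by simp [h0 x hx])
  have hcv := integral_image_eq_integral_abs_det_fderiv_smul (E := E) (F := ℝ) volume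
    (measurableSet_ball (x := (0 : E)) (ε := ρ)) (f := fun x => x + t • h x)
    (f' := fun x => 1 + t • fderiv ℝ h x)
    (fun x hx => ((hasFDerivAt_id x).add
      ((hd x hx).hasFDerivAt.const_smul t)).hasFDerivWithinAt) hbij.1.injOn (fun _ => 1)
  rw [himg] at hcv
  have hR : ∫ x in ball (0 : E) ρ, (1 : ℝ) = volume.real (ball (0 : E) ρ) := by simp
  rw [← hR, hcv]
  refine setIntegral_congr_fun measurableSet_ball fun x _ => ?_
  have := hpos t (ht.trans_le (min_le_left _ _)) (fderiv ℝ h x)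
    (norm_fderiv_le_of_lipschitz ℝ hL)
  simp [abs_of_pos this]

/-- The integral of the Jacobian of `x ↦ x + t h x` is polynomial in `t` and constant for small `t`,
hence it is still the volume of the ball at `t = 1`. -/
theorem integral_det_eq {h : E → E} {C : ℝ≥0} (hL : LipschitzWith C h) {ρ : ℝ}
    (hd : ∀ x ∈ ball (0 : E) ρ, DifferentiableAt ℝ h x) (h0 : ∀ x ∉ ball (0 : E) ρ, h x = 0) :
    ∫ x in ball (0 : E) ρ, (1 + fderiv ℝ h x : E →L[ℝ] E).det
        = volume.real (ball (0 : E) ρ) := by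
  obtain ⟨δ, hδ, hsmall⟩ := integral_det_small hL hd h0
  set n := Module.finrank ℝ E
  -- Interpolation at `n + 1` nodes in `[0, δ)` recovers the determinant at `t = 1`.
  let s := Finset.range (n + 1)
  let v : ℕ → ℝ := fun i => δ * (i / (n + 1))
  have hv : InjOn v s := by
    intro i _ j _ hij
    have hn : (n : ℝ) + 1 ≠ 0 := by positivity
    simp only [v] at hij
    have := mul_left_cancel₀ hδ.ne' hij
    field_simp at this
    exact_mod_cast this
  have hvs : ∀ i ∈ s, |v i| < δ := by
    intro i hi
    have hi' : (i : ℝ) < n + 1 := by exact_mod_cast Finset.mem_range.1 hi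
    have : v i < δ := by
      have : (i : ℝ) / (n + 1) < 1 := by rw [div_lt_one (by positivity)]; exact hi'
      simp only [v]
      nlinarith
    rwa [abs_of_nonneg (by positivity)]
  have key : ∀ L : E →L[ℝ] E, (1 + L : E →L[ℝ] E).det
      = ∑ i ∈ s, (Lagrange.basis s v i).eval 1 * (1 + v i • L : E →L[ℝ] E).det := by
    intro L
    obtain ⟨p, hp, hpe⟩ := det_one_add_smul_poly L
    have hdeg : p.degree < s.card := by
      refine (Polynomial.degree_le_of_natDegree_le hp).trans_lt ?_
      simp only [s, Finset.card_range]
      exact_mod_cast Nat.lt_succ_self n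
    have h1 := congrArg (Polynomial.eval 1) (Lagrange.eq_interpolate hv hdeg)
    rw [hpe, one_smul, Lagrange.interpolate_apply, Polynomial.eval_finsetSum] at h1
    rw [h1]
    refine Finset.sum_congr rfl fun i _ => ?_
    rw [Polynomial.eval_mul, Polynomial.eval_C, hpe, mul_comm]
  calc ∫ x in ball (0 : E) ρ, (1 + fderiv ℝ h x : E →L[ℝ] E).det
      = ∫ x in ball (0 : E) ρ, ∑ i ∈ s, (Lagrange.basis s v i).eval 1 *
          (1 + v i • fderiv ℝ h x : E →L[ℝ] E).det := by simp only [← key]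
    _ = ∑ i ∈ s, (Lagrange.basis s v i).eval 1 * ∫ x in ball (0 : E) ρ,
          (1 + v i • fderiv ℝ h x : E →L[ℝ] E).det := by
        rw [integral_finsetSum _ fun i _ => (integrableOn_det hL ρ (v i)).const_mul _]
        simp_rw [integral_const_mul]
    _ = ∑ i ∈ s, (Lagrange.basis s v i).eval 1 * volume.real (ball (0 : E) ρ) :=
        Finset.sum_congr rfl fun i hi => by rw [hsmall _ (hvs i hi)]
    _ = volume.real (ball (0 : E) ρ) := by
        have h1 := congrArg (Polynomial.eval 1) (Lagrange.sum_basis hv (by simp [s]))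
        rw [Polynomial.eval_finsetSum, Polynomial.eval_one] at h1
        rw [← Finset.sum_mul, h1, one_mul]

/-- No-retraction theorem: with `f x = x + h x`, no Lipschitz `f` that is the identity off the open
ball and differentiable in it maps that ball into the sphere. Otherwise `‖f‖` is constant there, so
`f'` is singular and the Jacobian vanishes, contradicting `integral_det_eq`. -/
theorem no_retraction {h : E → E} {C : ℝ≥0} (hL : LipschitzWith C h) {ρ : ℝ} (hρ : 0 < ρ)
    (hd : ∀ x ∈ ball (0 : E) ρ, DifferentiableAt ℝ h x) (h0 : ∀ x ∉ ball (0 : E) ρ, h x = 0)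
    (hsph : ∀ x ∈ ball (0 : E) ρ, ‖x + h x‖ = ρ) : False := by
  have hint := integral_det_eq hL hd h0
  have hdet : ∀ x ∈ ball (0 : E) ρ, (1 + fderiv ℝ h x : E →L[ℝ] E).det = 0 := by
    intro x hx
    by_contra hne
    have hf : HasFDerivAt (fun y => y + h y) (1 + fderiv ℝ h x) x :=
      (hasFDerivAt_id x).add (hd x hx).hasFDerivAt
    have hsq := hf.norm_sq
    have hconst : HasFDerivAt (fun y => ‖y + h y‖ ^ 2) (0 : E →L[ℝ] ℝ) x := by
      refine (hasFDerivAt_const (ρ ^ 2) x).congr_of_eventuallyEq ?_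
      filter_upwards [isOpen_ball.mem_nhds hx] with y hy
      rw [hsph y hy]
    have hz := hsq.unique hconst
    let e := ContinuousLinearMap.toContinuousLinearEquivOfDetNeZero _ hne
    have h1 := DFunLike.congr_fun hz (e.symm (x + h x))
    have h2 : (1 + fderiv ℝ h x : E →L[ℝ] E) (e.symm (x + h x)) = x + h x :=
      e.apply_symm_apply _
    have h3 : inner ℝ (x + h x) ((1 + fderiv ℝ h x : E →L[ℝ] E) (e.symm (x + h x))) = 0 := by
      have h4 : 2 * inner ℝ (x + h x)
          ((1 + fderiv ℝ h x : E →L[ℝ] E) (e.symm (x + h x))) = 0 := by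
        rw [smul_apply, nsmul_eq_mul] at h1
        exact_mod_cast h1
      linarith
    rw [h2, real_inner_self_eq_norm_sq, hsph x hx] at h3
    exact hρ.ne' (pow_eq_zero_iff two_ne_zero |>.1 h3)
  rw [setIntegral_congr_fun measurableSet_ball hdet] at hint
  have hpos : 0 < volume.real (ball (0 : E) ρ) :=
    ENNReal.toReal_pos (measure_ball_pos _ _ hρ).ne' measure_ball_lt_top.ne
  simp only [integral_zero] at hint
  exact hpos.ne hint

/-- A nowhere vanishing smooth `K` equal to the identity off a ball would give, after normalization
to `ρ K / ‖K‖` in the ball, a retraction onto the sphere. -/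
theorem no_smooth_nonvanishing {K : E → E} (hK : ContDiff ℝ ∞ K) {ρ : ℝ} (hρ : 0 < ρ)
    (hid : ∀ x ∉ ball (0 : E) ρ, K x = x) (hne : ∀ x, K x ≠ 0) : False := by
  have hlipK : ∃ C, LipschitzWith C K := by
    have hsupp : HasCompactSupport (fun x => K x - x) := by
      refine HasCompactSupport.of_support_subset_isCompact (isCompact_closedBall (0 : E) ρ) ?_
      intro x hx
      by_contra hx'
      exact hx (sub_eq_zero.2 (hid x fun h => hx' (ball_subset_closedBall h)))
    obtain ⟨C, hC⟩ := ContDiff.lipschitzWith_of_hasCompactSupport (𝕂 := ℝ) (n := ∞) hsupp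
      (hK.sub contDiff_id) (by simp)
    refine ⟨C + 1, ?_⟩
    have := hC.add LipschitzWith.id
    simpa using this
  obtain ⟨C, hC⟩ := hlipK
  obtain ⟨c, hc, hcK⟩ : ∃ c : ℝ≥0, 0 < c ∧ ∀ x, c ≤ ‖K x‖ := by
    obtain ⟨x₀, -, hx₀⟩ := (isCompact_closedBall (0 : E) ρ).exists_isMinOn
      ⟨0, mem_closedBall_self hρ.le⟩ hK.continuous.norm.continuousOn
    refine ⟨⟨min ‖K x₀‖ ρ, by positivity⟩, ?_, fun x => ?_⟩
    · exact lt_min (norm_pos_iff.2 (hne x₀)) hρ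
    · by_cases hx : x ∈ ball (0 : E) ρ
      · exact (min_le_left _ _).trans (hx₀ (ball_subset_closedBall hx))
      · rw [hid x hx]
        exact (min_le_right _ _).trans (by simpa using hx)
  -- The perturbation `ρ (K / ‖K‖ - x / max ‖x‖ ρ)` is globally Lipschitz and vanishes off the ball.
  have hn := lipschitz_inv_smul hC (lipschitzWith_one_norm.comp hC) hc hcK fun x => le_rfl
  have hq := lipschitz_inv_smul (E := E) LipschitzWith.id
    (s := fun x => max ‖x‖ ρ) (lipschitzWith_one_norm.max_const ρ) (c := ⟨ρ, hρ.le⟩) hρ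
    (fun x => le_max_right _ _) (fun x => le_max_left _ _)
  have hL := (lipschitzWith_smul ρ).comp (hn.sub hq)
  have hin : ∀ x ∈ ball (0 : E) ρ, ρ • (‖K x‖⁻¹ • K x - (max ‖x‖ ρ)⁻¹ • x)
      = ρ • (‖K x‖⁻¹ • K x) - x := by
    intro x hx
    rw [max_eq_right (by simpa using (mem_ball_zero_iff.1 hx).le), smul_sub,
      smul_inv_smul₀ hρ.ne']
  refine no_retraction hL hρ (fun x hx => ?_) (fun x hx => ?_) (fun x hx => ?_)
  · have hKd : DifferentiableAt ℝ K x := hK.differentiable (by simp) x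
    have : DifferentiableAt ℝ (fun x => ρ • (‖K x‖⁻¹ • K x) - x) x :=
      ((((hKd.norm ℝ (hne x)).inv (norm_ne_zero_iff.2 (hne x))).smul hKd).const_smul ρ).sub
        differentiableAt_id
    refine this.congr_of_eventuallyEq ?_
    filter_upwards [isOpen_ball.mem_nhds hx] with y hy
    exact hin y hy
  · have : ρ ≤ ‖x‖ := by simpa using hx
    simp [hid x hx, max_eq_left this]
  · have e : ((fun x => ρ • x) ∘ fun x => ‖K x‖⁻¹ • K x - (max ‖x‖ ρ)⁻¹ • x) x
      = ρ • (‖K x‖⁻¹ • K x) - x := hin x hx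
    refine (congrArg (fun z => ‖x + z‖) e).trans ?_
    have : ‖K x‖ ≠ 0 := norm_ne_zero_iff.2 (hne x)
    simp [norm_smul, this, abs_of_pos hρ]

/-- The form of Brouwer's theorem used for nonlinear systems: a continuous vector field pointing
outwards far from the origin has a zero. -/
theorem exists_zero_of_inner_pos {F : E → E} (hF : Continuous F) {R : ℝ} (hR : 0 < R)
    (hpos : ∀ x, R ≤ ‖x‖ → 0 < inner ℝ (F x) x) : ∃ x, F x = 0 := by
  by_contra! hne
  let θ : ContDiffBump (0 : E) := ⟨R, 2 * R, hR, by linarith⟩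
  -- `H` is `F` near the origin and the identity far away; it still has no zero.
  let H : E → E := fun x => x + θ x • (F x - x)
  have hk : Continuous fun x => θ x • (F x - x) := θ.continuous.smul (hF.sub continuous_id)
  have hH : Continuous H := continuous_id.add hk
  have hHne : ∀ x, H x ≠ 0 := by
    intro x hx
    rcases le_total ‖x‖ R with h | h
    · have : θ x = 1 := θ.one_of_mem_closedBall (by simpa using h)
      apply hne x
      simpa [H, this] using hx
    · have h1 : inner ℝ (H x) x = θ x * inner ℝ (F x) x + (1 - θ x) * ‖x‖ ^ 2 := by
        simp only [H, inner_add_left, inner_smul_left, inner_sub_left, real_inner_self_eq_norm_sq]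
        simp
        ring
      rw [hx, inner_zero_left] at h1
      have h2 := hpos x h
      have h3 : 0 < ‖x‖ ^ 2 := by have := hR.trans_le h; positivity
      have h4 : 0 ≤ θ x := θ.nonneg
      have h5 : θ x ≤ 1 := θ.le_one
      rcases h4.eq_or_lt with h6 | h6
      · rw [← h6] at h1; linarith
      · nlinarith [mul_pos h6 h2, mul_nonneg (sub_nonneg.2 h5) h3.le]
  -- The tolerance `‖H x‖` in the smooth approximation is exactly what keeps it nonvanishing.
  obtain ⟨g, hg, hgk, hsupp⟩ := hk.exists_contDiff_approx ⊤ hH.norm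
    (fun x => norm_pos_iff.2 (hHne x))
  refine no_smooth_nonvanishing (K := fun x => x + g x) (contDiff_id.add hg)
    (ρ := 2 * R) (by linarith) (fun x hx => ?_) (fun x hx => ?_)
  · have h0 : θ x = 0 := θ.zero_of_le_dist (by simpa [θ] using hx)
    have : g x = 0 := by
      by_contra h
      exact hsupp h (by simp [h0])
    simp [this]
  · have h1 := hgk x
    rw [dist_eq_norm] at h1
    have h2 : g x - θ x • (F x - x) = (x + g x) - H x := by simp [H]
    rw [h2, hx, zero_sub, norm_neg] at h1
    exact lt_irrefl _ h1

end Brouwer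

/-! ### The stabilized system -/

section Stabilization

/-- Replacing `|d|` by `d` preserves continuity: off the zeros of `d` the sign is locally constant,
and at a zero the product tends to `0` because `r` is bounded. -/
theorem continuous_mul_of_abs {X : Type*} [TopologicalSpace X] {r d : X → ℝ} {C : ℝ}
    (hr : ∀ x, |r x| ≤ C) (hd : Continuous d) (h : Continuous fun x => r x * |d x|) :
    Continuous fun x => r x * d x := by
  rw [continuous_iff_continuousAt]
  intro x
  by_cases hx : d x = 0
  · have hlim : Filter.Tendsto (fun y => C * |d y|) (nhds x) (nhds 0) := by
      have : Continuous fun y => C * |d y| := by fun_prop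
      simpa [hx] using this.tendsto x
    have : Filter.Tendsto (fun y => r y * d y) (nhds x) (nhds 0) := by
      refine squeeze_zero_norm (fun y => ?_) hlim
      rw [Real.norm_eq_abs, abs_mul]
      exact mul_le_mul_of_nonneg_right (hr y) (abs_nonneg _)
    simpa [ContinuousAt, hx] using this
  · have e : (fun y => r y * d y) = fun y => (r y * |d y|) * (d y / |d y|) := by
      ext y
      by_cases hy : d y = 0
      · simp [hy]
      · have : |d y| ≠ 0 := abs_ne_zero.2 hy
        field_simp
    rw [e]
    exact h.continuousAt.mul
      (hd.continuousAt.div hd.abs.continuousAt (abs_ne_zero.2 hx))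

theorem continuous_neg_max_mul {X : Type*} [TopologicalSpace X] {p q : X → ℝ} {a c : ℝ} {d : X → ℝ}
    (hp : ∀ x, p x ∈ Set.Icc (0 : ℝ) 1) (hq : ∀ x, q x ∈ Set.Icc (0 : ℝ) 1) (hd : Continuous d)
    (hpc : 0 < a → Continuous fun x => p x * d x) (hqc : 0 < c → Continuous fun x => q x * d x) :
    Continuous fun x => -max (p x * a) (max 0 (q x * c)) * d x := by
  have aux : ∀ {s : X → ℝ} {e : ℝ}, (∀ x, s x ∈ Set.Icc (0 : ℝ) 1) →
      (0 < e → Continuous fun x => s x * d x) → Continuous fun x => max (s x * e) 0 * |d x| := by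
    intro s e hs hc
    rcases le_or_gt e 0 with he | he
    · have : (fun x => max (s x * e) 0 * |d x|) = fun _ => 0 := by
        ext x
        rw [max_eq_right (mul_nonpos_of_nonneg_of_nonpos (hs x).1 he), zero_mul]
      rw [this]
      exact continuous_const
    · have : (fun x => max (s x * e) 0 * |d x|) = fun x => e * |s x * d x| := by
        ext x
        rw [max_eq_left (mul_nonneg (hs x).1 he.le), abs_mul, abs_of_nonneg (hs x).1]
        ring
      rw [this]
      exact continuous_const.mul (hc he).abs
  have bd : ∀ {s e : ℝ}, s ∈ Set.Icc (0 : ℝ) 1 → |s * e| ≤ |e| := by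
    intro s e hs
    rw [abs_mul, abs_of_nonneg hs.1]
    exact mul_le_of_le_one_left (abs_nonneg _) hs.2
  refine continuous_mul_of_abs (C := max |a| |c|) (fun x => ?_) hd ?_
  · rw [abs_neg, abs_of_nonneg (le_max_of_le_right (le_max_left _ _))]
    refine max_le ?_ (max_le ?_ ?_)
    · exact le_max_of_le_left ((le_abs_self _).trans (bd (hp x)))
    · exact le_max_of_le_left (abs_nonneg _)
    · exact le_max_of_le_right ((le_abs_self _).trans (bd (hq x)))
  · have : (fun x => -max (p x * a) (max 0 (q x * c)) * |d x|)
        = fun x => -max (max (p x * a) 0 * |d x|) (max (q x * c) 0 * |d x|) := by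
      ext x
      rw [← max_mul_of_nonneg _ _ (abs_nonneg _), neg_mul, max_comm (q x * c) 0, max_assoc,
        ← max_assoc 0 0, max_self]
    rw [this]
    exact ((aux hp hpc).max (aux hq hqc)).neg

/-- A symmetric matrix with zero row sums and nonpositive off-diagonal entries is positive
semidefinite: its quadratic form is `-½ ∑ B i j (w i - w j)²`. -/
theorem diffusion_nonneg {ι : Type*} [Fintype ι] (B : ι → ι → ℝ) (hsymm : ∀ i j, B i j = B j i)
    (hoff : ∀ i j, i ≠ j → B i j ≤ 0) (hrow : ∀ i, ∑ j, B i j = 0) (w : ι → ℝ) :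
    0 ≤ ∑ i, ∑ j, B i j * w j * w i := by
  have e : ∑ i, ∑ j, B i j * (w i - w j) ^ 2 = -2 * ∑ i, ∑ j, B i j * w j * w i := by
    have h1 : ∑ i, ∑ j, B i j * w i ^ 2 = 0 := by
      simp_rw [← Finset.sum_mul, hrow, zero_mul, Finset.sum_const_zero]
    have h2 : ∑ i, ∑ j, B i j * w j ^ 2 = 0 := by
      rw [Finset.sum_comm]
      refine Finset.sum_eq_zero fun j _ => ?_
      rw [← Finset.sum_mul, Finset.sum_congr rfl fun i _ => hsymm i j]
      rw [hrow, zero_mul]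
    have h3 : ∀ i j, B i j * (w i - w j) ^ 2
        = B i j * w i ^ 2 + B i j * w j ^ 2 + -2 * (B i j * w j * w i) := by
      intro i j; ring
    simp_rw [h3, Finset.sum_add_distrib, ← Finset.mul_sum, h1, h2]
    ring
  have : ∑ i, ∑ j, B i j * (w i - w j) ^ 2 ≤ 0 := by
    refine Finset.sum_nonpos fun i _ => Finset.sum_nonpos fun j _ => ?_
    by_cases h : i = j
    · simp [h]
    · exact mul_nonpos_of_nonpos_of_nonneg (hoff i j h) (sq_nonneg _)
  linarith

theorem quadratic_coercive {M : ℕ} (A : Fin M → Fin M → ℝ)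
    (hA : ∀ v : Fin M → ℝ, v ≠ 0 → 0 < ∑ i, ∑ j, A i j * v i * v j) :
    ∃ α > 0, ∀ v : EuclideanSpace ℝ (Fin M), α * ‖v‖ ^ 2 ≤ ∑ i, ∑ j, A i j * v i * v j := by
  have hQ : Continuous fun v : EuclideanSpace ℝ (Fin M) => ∑ i, ∑ j, A i j * v i * v j := by
    fun_prop
  rcases (Metric.sphere (0 : EuclideanSpace ℝ (Fin M)) 1).eq_empty_or_nonempty with he | hne
  · refine ⟨1, one_pos, fun v => ?_⟩
    have : v = 0 := by
      by_contra hv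
      have : (‖v‖⁻¹ : ℝ) • v ∈ Metric.sphere (0 : EuclideanSpace ℝ (Fin M)) 1 := by
        simp [norm_smul, hv]
      rw [he] at this
      exact this
    simp [this]
  · obtain ⟨v₀, hv₀, hmin⟩ := (isCompact_sphere (0 : EuclideanSpace ℝ (Fin M)) 1).exists_isMinOn
      hne hQ.continuousOn
    have hv₀' : v₀ ≠ 0 := by
      rintro rfl
      simp at hv₀
    refine ⟨_, hA (fun i => v₀ i) (fun h => hv₀' (by ext i; exact congrFun h i)), fun v => ?_⟩
    by_cases hv : v = 0
    · simp [hv]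
    · have hvn : ‖v‖ ≠ 0 := norm_ne_zero_iff.2 hv
      have h1 : (‖v‖⁻¹ : ℝ) • v ∈ Metric.sphere (0 : EuclideanSpace ℝ (Fin M)) 1 := by
        simp [norm_smul, hv]
      have h2 := hmin h1
      have h3 : ∑ i, ∑ j, A i j * ((‖v‖⁻¹ : ℝ) • v) i * ((‖v‖⁻¹ : ℝ) • v) j
          = (‖v‖⁻¹) ^ 2 * ∑ i, ∑ j, A i j * v i * v j := by
        simp_rw [Finset.mul_sum]
        refine Finset.sum_congr rfl fun i _ => Finset.sum_congr rfl fun j _ => ?_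
        simp only [PiLp.smul_apply, smul_eq_mul]
        ring
      have h4 : (∑ i, ∑ j, A i j * v₀ i * v₀ j) ≤
          ∑ i, ∑ j, A i j * ((‖v‖⁻¹ : ℝ) • v) i * ((‖v‖⁻¹ : ℝ) • v) j := h2
      rw [h3] at h4
      calc _ ≤ ((‖v‖⁻¹) ^ 2 * ∑ i, ∑ j, A i j * v i * v j) * ‖v‖ ^ 2 := by gcongr
        _ = _ := by field_simp

/-- Solvability for any solution-dependent diffusion `b` that is symmetric, has zero row sums,
nonpositive bounded off-diagonal entries and continuous fluxes `b i j (U) (U j - U i)`. -/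
theorem muas_exists_solution
    {N M : ℕ} (hMN : M ≤ N) (A : Fin N → Fin N → ℝ)
    (hA : ∀ v : Fin M → ℝ, v ≠ 0 →
      0 < ∑ i, ∑ j, A (Fin.castLE hMN i) (Fin.castLE hMN j) * v i * v j)
    (b : (Fin N → ℝ) → Fin N → Fin N → ℝ)
    (hsymm : ∀ U i j, b U i j = b U j i) (hoff : ∀ U i j, i ≠ j → b U i j ≤ 0)
    (hrow : ∀ U i, ∑ j, b U i j = 0)
    (hcont : ∀ i j, Continuous fun U : Fin N → ℝ => b U i j * (U j - U i))
    {D : ℝ} (hD : ∀ U i j, i ≠ j → |b U i j| ≤ D) (g ub : Fin N → ℝ) :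
    ∃ U : Fin N → ℝ, (∀ i : Fin N, M ≤ (i : ℕ) → U i = ub i) ∧
      (∀ i : Fin N, (i : ℕ) < M → ∑ j, (A i j + b U i j) * U j = g i) := by
  let c : Fin M → Fin N := Fin.castLE hMN
  have hcinj : Function.Injective c := Fin.castLE_injective hMN
  -- `W V` and `Z` are the interior and the boundary part of the vector `U V`.
  let W : EuclideanSpace ℝ (Fin M) → Fin N → ℝ :=
    fun V i => if h : (i : ℕ) < M then V ⟨i, h⟩ else 0
  let Z : Fin N → ℝ := fun i => if (i : ℕ) < M then 0 else ub i
  let U : EuclideanSpace ℝ (Fin M) → Fin N → ℝ := fun V i => W V i + Z i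
  have hWc : ∀ V i, W V (c i) = V i := fun V i => by simp [W, c]
  have hW0 : ∀ V (i : Fin N), ¬ (i : ℕ) < M → W V i = 0 := fun V i h => by simp [W, h]
  have hZc : ∀ i, Z (c i) = 0 := fun i => by simp [Z, c]
  have hrange : ∀ i : Fin N, i ∉ Set.range c → ¬ (i : ℕ) < M :=
    fun i hi h => hi ⟨⟨i, h⟩, rfl⟩
  have hsum : ∀ (V : EuclideanSpace ℝ (Fin M)) (y : Fin N → ℝ),
      ∑ i, y (c i) * V i = ∑ i, y i * W V i := fun V y =>
    Fintype.sum_of_injective c hcinj _ _ (fun i hi => by rw [hW0 V i (hrange i hi), mul_zero])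
      (fun i => by rw [hWc])
  have hWcont : ∀ i, Continuous fun V => W V i := by
    intro i
    by_cases h : (i : ℕ) < M
    · simp only [W, h, dite_true]
      fun_prop
    · simp only [W, h, dite_false]
      fun_prop
  have hUcont : Continuous U := continuous_pi fun i => (hWcont i).add continuous_const
  let G : EuclideanSpace ℝ (Fin M) → Fin N → ℝ :=
    fun V i => ∑ j, (A i j + b (U V) i j) * U V j - g i
  let F : EuclideanSpace ℝ (Fin M) → EuclideanSpace ℝ (Fin M) :=
    fun V => WithLp.toLp 2 fun i => G V (c i)
  have hGcont : ∀ i, Continuous fun V => G V i := by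
    intro i
    -- The row sums of `b` vanish, so only the continuous products `b i j * (U j - U i)` occur.
    have e : (fun V => G V i) =
        fun V => ∑ j, A i j * U V j + ∑ j, b (U V) i j * (U V j - U V i) - g i := by
      ext V
      have : ∑ j, b (U V) i j * (U V j - U V i) = ∑ j, b (U V) i j * U V j := by
        simp_rw [mul_sub, Finset.sum_sub_distrib, ← Finset.sum_mul, hrow, zero_mul, sub_zero]
      simp only [G]
      rw [this, ← Finset.sum_add_distrib]
      simp_rw [add_mul]
    rw [e]
    have h1 : ∀ j, Continuous fun V => U V j := fun j => (continuous_apply j).comp hUcont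
    refine ((continuous_finsetSum _ fun j _ => continuous_const.mul (h1 j)).add
      (continuous_finsetSum _ fun j _ => (hcont i j).comp hUcont)).sub continuous_const
  have hFcont : Continuous F :=
    (PiLp.continuous_toLp 2 _).comp (continuous_pi fun i => hGcont (c i))
  obtain ⟨α, hα, hcoer⟩ := quadratic_coercive (fun i j => A (c i) (c j)) hA
  let K : Fin M → ℝ := fun i => ∑ j, (|A (c i) j| + D) * |Z j| + |g (c i)|
  let S : ℝ := ∑ i, |K i|
  have hS : 0 ≤ S := Finset.sum_nonneg fun i _ => abs_nonneg _
  have hlow : ∀ V, α * ‖V‖ ^ 2 - S * ‖V‖ ≤ inner ℝ (F V) V := by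
    intro V
    have h0 : inner ℝ (F V) V = ∑ i, G V (c i) * V i := by
      simp [PiLp.inner_apply, F, mul_comm]
    have h1 : ∑ i, G V (c i) * V i =
        ∑ i, ∑ j, A (c i) (c j) * V i * V j + ∑ i, ∑ j, b (U V) i j * W V j * W V i
        + ∑ i, (∑ j, (A (c i) j + b (U V) (c i) j) * Z j - g (c i)) * V i := by
      have e1 : ∑ i, ∑ j, A (c i) (c j) * V i * V j = ∑ i, (∑ j, A (c i) j * W V j) * V i := by
        refine Finset.sum_congr rfl fun i _ => ?_
        rw [← hsum V (fun j => A (c i) j), Finset.sum_mul]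
        exact Finset.sum_congr rfl fun j _ => by ring
      have e2 : ∑ i, ∑ j, b (U V) i j * W V j * W V i
          = ∑ i, (∑ j, b (U V) (c i) j * W V j) * V i := by
        rw [hsum V (fun i => ∑ j, b (U V) i j * W V j)]
        simp_rw [Finset.sum_mul]
      rw [e1, e2, ← Finset.sum_add_distrib, ← Finset.sum_add_distrib]
      refine Finset.sum_congr rfl fun i _ => ?_
      rw [← add_mul, ← add_mul, ← Finset.sum_add_distrib, ← add_sub_assoc,
        ← Finset.sum_add_distrib]
      simp only [G]
      congr 2
      exact Finset.sum_congr rfl fun j _ => by simp only [U]; ring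
    have h2 := diffusion_nonneg (b (U V)) (hsymm _) (hoff _) (hrow _) (W V)
    have h3 : -(S * ‖V‖) ≤
        ∑ i, (∑ j, (A (c i) j + b (U V) (c i) j) * Z j - g (c i)) * V i := by
      rw [← neg_le_neg_iff, neg_neg, Finset.sum_mul, ← Finset.sum_neg_distrib]
      refine Finset.sum_le_sum fun i _ => (neg_le_abs _).trans ?_
      rw [abs_mul]
      have hV : |V i| ≤ ‖V‖ := PiLp.norm_apply_le V i
      have hK : |∑ j, (A (c i) j + b (U V) (c i) j) * Z j - g (c i)| ≤ K i := by
        refine (abs_sub _ _).trans (add_le_add ?_ le_rfl)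
        refine (Finset.abs_sum_le_sum_abs _ _).trans (Finset.sum_le_sum fun j _ => ?_)
        rw [abs_mul]
        -- The diagonal entry, for which `hD` gives no bound, meets `Z (c i) = 0`.
        by_cases hj : c i = j
        · rw [← hj, hZc]; simp
        · gcongr
          exact (abs_add_le _ _).trans (add_le_add le_rfl (hD _ _ _ hj))
      exact mul_le_mul (hK.trans (le_abs_self _)) hV (abs_nonneg _) (abs_nonneg _)
    rw [h0, h1]
    have := hcoer V
    linarith
  obtain ⟨V, hV⟩ := exists_zero_of_inner_pos hFcont (R := S / α + 1) (by positivity) fun V hV => by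
    refine lt_of_lt_of_le ?_ (hlow V)
    have h1 : S < α * ‖V‖ := by
      have : S / α < ‖V‖ := by linarith
      rwa [div_lt_iff₀' hα] at this
    have h2 : 0 < ‖V‖ := lt_of_lt_of_le (by positivity) hV
    nlinarith
  refine ⟨U V, fun i hi => ?_, fun i hi => ?_⟩
  · simp [U, W, Z, not_lt.2 hi]
  · have h1 : (F V) ⟨i, hi⟩ = 0 := by rw [hV]; rfl
    exact sub_eq_zero.1 h1

end Stabilization


/-- Existence theorem for algebraically stabilized methods of monotone upwind type
(MUAS/SMUAS): with `b_{ij}(U) = -max{β_{ij}(U) a_{ij}, 0, β_{ji}(U) a_{ji}}` for `i ≠ j`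
and `b_{ii}(U) = -∑_{j≠i} b_{ij}(U)`, where `β_{ij} : ℝ^N → [0,1]` and
`U ↦ β_{ij}(U)(u_j - u_i)` is continuous whenever `a_{ij} > 0`, one has:
(i) `U ↦ b_{ij}(U)(u_j - u_i)` is continuous for interior `i` and all `j`;
(ii) `|b_{ij}(U)| ≤ max{|a_{ij}|, |a_{ji}|}` for `i ≠ j` (so `b_{ij}` is bounded);
(iii) the nonlinear system with any right-hand side and boundary values has a solution. -/
theorem muas_existence
    (N M : ℕ) (hM1 : 1 ≤ M) (hMN : M ≤ N)
    (A : Fin N → Fin N → ℝ)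
    (hA : ∀ v : Fin M → ℝ, v ≠ 0 →
      0 < ∑ i, ∑ j, A (Fin.castLE hMN i) (Fin.castLE hMN j) * v i * v j)
    (β : Fin N → Fin N → (Fin N → ℝ) → ℝ)
    (hβ01 : ∀ i j : Fin N, ∀ U : Fin N → ℝ, β i j U ∈ Set.Icc (0 : ℝ) 1)
    (hβcont : ∀ i j : Fin N, 0 < A i j →
      Continuous (fun U : Fin N → ℝ => β i j U * (U j - U i)))
    (b : (Fin N → ℝ) → Fin N → Fin N → ℝ)
    (hboff : ∀ U : Fin N → ℝ, ∀ i j : Fin N, i ≠ j →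
      b U i j = -max (β i j U * A i j) (max 0 (β j i U * A j i)))
    (hbdiag : ∀ U : Fin N → ℝ, ∀ i : Fin N,
      b U i i = -∑ j ∈ Finset.univ.filter (fun j => j ≠ i), b U i j) :
    (∀ i j : Fin N, (i : ℕ) < M →
        Continuous (fun U : Fin N → ℝ => b U i j * (U j - U i))) ∧
    (∀ U : Fin N → ℝ, ∀ i j : Fin N, i ≠ j → |b U i j| ≤ max |A i j| |A j i|) ∧
    (∀ g ub : Fin N → ℝ, ∃ U : Fin N → ℝ,
        (∀ i : Fin N, M ≤ (i : ℕ) → U i = ub i) ∧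
        (∀ i : Fin N, (i : ℕ) < M → ∑ j, (A i j + b U i j) * U j = g i)) := by
  have hoffle : ∀ U i j, i ≠ j → b U i j ≤ 0 := fun U i j hij => by
    rw [hboff U i j hij, neg_nonpos]
    exact le_max_of_le_right (le_max_left _ _)
  have hsymm : ∀ U i j, b U i j = b U j i := fun U i j => by
    by_cases hij : i = j
    · rw [hij]
    · rw [hboff U i j hij, hboff U j i (Ne.symm hij), max_left_comm, max_comm (β i j U * A i j),
        max_left_comm]
  have hrow : ∀ U i, ∑ j, b U i j = 0 := fun U i => by
    rw [← Finset.add_sum_erase _ _ (Finset.mem_univ i), hbdiag U i, ← Finset.filter_ne']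
    ring
  have hcont : ∀ i j : Fin N, Continuous fun U : Fin N → ℝ => b U i j * (U j - U i) := by
    intro i j
    by_cases hij : i = j
    · subst hij
      simpa using continuous_const
    · simp_rw [hboff _ i j hij]
      refine continuous_neg_max_mul (hβ01 i j) (hβ01 j i) (by fun_prop) (hβcont i j) fun h => ?_
      refine (hβcont j i h).neg.congr fun U => ?_
      simp only [Pi.neg_apply]
      ring
  have hbound : ∀ U : Fin N → ℝ, ∀ i j : Fin N, i ≠ j → |b U i j| ≤ max |A i j| |A j i| := by
    have bd : ∀ i j U, β i j U * A i j ≤ |A i j| := fun i j U =>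
      (mul_le_mul_of_nonneg_left (le_abs_self _) (hβ01 i j U).1).trans
        (mul_le_of_le_one_left (abs_nonneg _) (hβ01 i j U).2)
    intro U i j hij
    rw [abs_of_nonpos (hoffle U i j hij), hboff U i j hij, neg_neg]
    exact max_le (le_max_of_le_left (bd i j U))
      (max_le (le_max_of_le_left (abs_nonneg _)) (le_max_of_le_right (bd j i U)))
  refine ⟨fun i j _ => hcont i j, hbound, ?_⟩
  have hle : ∀ i j, |A i j| ≤ ∑ k, ∑ l, |A k l| := fun i j =>
    (Finset.single_le_sum (f := fun l => |A i l|) (fun _ _ => abs_nonneg _)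
      (Finset.mem_univ j)).trans
    (Finset.single_le_sum (f := fun k => ∑ l, |A k l|)
      (fun _ _ => Finset.sum_nonneg fun _ _ => abs_nonneg _) (Finset.mem_univ i))
  exact muas_exists_solution hMN A hA b hsymm hoffle hrow hcont
    fun U i j hij => (hbound U i j hij).trans (max_le (hle i j) (hle j i))
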